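/- For every very weak alternating automaton 𝒜 over an alphabet A with n states there exist a backward deterministic automaton ℬ over A with a generalized transition Büchi recurrence condition and at most 2^n states, and an output function λ from the states of ℬ to subsets of the state set of 𝒜, such that f_𝒜 = f_{ℬ,λ}. -/

import Mathlib

/-- Transition conditions over state set `Q` and alphabet `A`: built from atoms `B ⊆ A`
and `○q` for `q ∈ Q` using disjunction and conjunction. -/
inductive TCond (Q : Type*) (A : Type*) : Type _ where
  | atom : Set A → TCond Q A
  | next : Q → TCond Q A
  | or   : TCond Q A → TCond Q A → TCond Q A
  | and  : TCond Q A → TCond Q A → TCond Q A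

namespace TCond

/-- `○q` occurs in the transition condition. -/
def NextOccurs {Q A : Type*} : TCond Q A → Q → Prop
  | atom _, _ => False
  | next q', q => q' = q
  | or τ₀ τ₁, q => τ₀.NextOccurs q ∨ τ₁.NextOccurs q
  | and τ₀ τ₁, q => τ₀.NextOccurs q ∨ τ₁.NextOccurs q

/-- The subformula relation on transition conditions. -/
inductive Subf {Q A : Type*} : TCond Q A → TCond Q A → Prop
  | refl (τ : TCond Q A) : Subf τ τ
  | orL {χ τ₀ τ₁} : Subf χ τ₀ → Subf χ (or τ₀ τ₁)
  | orR {χ τ₀ τ₁} : Subf χ τ₁ → Subf χ (or τ₀ τ₁)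
  | andL {χ τ₀ τ₁} : Subf χ τ₀ → Subf χ (and τ₀ τ₁)
  | andR {χ τ₀ τ₁} : Subf χ τ₁ → Subf χ (and τ₀ τ₁)

end TCond

/-- A weak alternating automaton over the alphabet `A` with state set `Q`:
a transition function `δ` and a partition of the states into recurring states
(the set `recurring`) and non-recurring states (its complement), such that any two states
in the same strongly connected component of the transition graph are both recurring or
both non-recurring. -/
structure WAA (Q : Type*) (A : Type*) where
  δ : Q → TCond Q A
  recurring : Set Q
  weak : ∀ q q',
    Relation.ReflTransGen (fun x y => (δ x).NextOccurs y) q q' →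
    Relation.ReflTransGen (fun x y => (δ x).NextOccurs y) q' q →
    (q ∈ recurring ↔ q' ∈ recurring)

namespace WAA

variable {Q A : Type*}

/-- The edge relation of the transition graph of a weak alternating automaton. -/
def Edge (M : WAA Q A) (q q' : Q) : Prop := (M.δ q).NextOccurs q'

/-- `q` and `q'` lie in the same strongly connected component of the transition graph. -/
def Conn (M : WAA Q A) (q q' : Q) : Prop :=
  Relation.ReflTransGen M.Edge q q' ∧ Relation.ReflTransGen M.Edge q' q

/-- Vertices of run graphs: pairs of a position and either a state or a transition
condition. -/
abbrev Vert (Q A : Type*) := ℕ × (Q ⊕ TCond Q A)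

/-- A run graph of a weak alternating automaton on an ω-word `u`. -/
structure RunGraph (M : WAA Q A) (u : ℕ → A) where
  V : Set (Vert Q A)
  E : Vert Q A → Vert Q A → Prop
  edge_mem : ∀ ⦃v w⦄, E v w → v ∈ V ∧ w ∈ V
  /-- every transition-condition vertex carries a subformula of some `δ q` -/
  cond_subf : ∀ i τ, (i, Sum.inr τ) ∈ V → ∃ q, TCond.Subf τ (M.δ q)
  /-- a state vertex has exactly one outgoing edge, to `⟨i, δ q⟩` -/
  state_succ : ∀ i q, (i, Sum.inl q) ∈ V →
    ∀ w, E (i, Sum.inl q) w ↔ w = (i, Sum.inr (M.δ q))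
  /-- a `○q` vertex has exactly one outgoing edge, to `⟨i+1, q⟩` -/
  next_succ : ∀ i q, (i, Sum.inr (TCond.next q)) ∈ V →
    ∀ w, E (i, Sum.inr (TCond.next q)) w ↔ w = (i + 1, Sum.inl q)
  /-- a disjunction vertex has outgoing edges only to the disjuncts, and at least one -/
  or_succ_subset : ∀ i τ₀ τ₁, (i, Sum.inr (TCond.or τ₀ τ₁)) ∈ V →
    ∀ w, E (i, Sum.inr (TCond.or τ₀ τ₁)) w → w = (i, Sum.inr τ₀) ∨ w = (i, Sum.inr τ₁)
  or_succ_exists : ∀ i τ₀ τ₁, (i, Sum.inr (TCond.or τ₀ τ₁)) ∈ V →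
    ∃ w, E (i, Sum.inr (TCond.or τ₀ τ₁)) w
  /-- a conjunction vertex has outgoing edges exactly to the two conjuncts -/
  and_succ : ∀ i τ₀ τ₁, (i, Sum.inr (TCond.and τ₀ τ₁)) ∈ V →
    ∀ w, E (i, Sum.inr (TCond.and τ₀ τ₁)) w ↔ (w = (i, Sum.inr τ₀) ∨ w = (i, Sum.inr τ₁))
  /-- atom vertices have no outgoing edges -/
  atom_succ : ∀ i B w, ¬ E (i, Sum.inr (TCond.atom B)) w
  /-- there is no vertex `⟨i, B⟩` with `u i ∉ B` -/
  atom_ok : ∀ i B, (i, Sum.inr (TCond.atom B)) ∈ V → u i ∈ B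

/-- A run graph is final if on every infinite path, every state occurring infinitely
often (as the second component of vertices of the path) is recurring. -/
def RunGraph.Final {M : WAA Q A} {u : ℕ → A} (G : RunGraph M u) : Prop :=
  ∀ p : ℕ → Vert Q A, (∀ n, G.E (p n) (p (n + 1))) →
    ∀ q : Q, (∀ m, ∃ n, m ≤ n ∧ (p n).2 = Sum.inl q) → q ∈ M.recurring

/-- The suffix `u[i,ω)` is accepted from state `q` if some final run graph on `u`
contains the vertex `⟨i, q⟩`. -/
def AcceptsFrom (M : WAA Q A) (u : ℕ → A) (i : ℕ) (q : Q) : Prop :=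
  ∃ G : RunGraph M u, G.Final ∧ (i, Sum.inl q) ∈ G.V

end WAA

/-- A (backward) run of a backward deterministic automaton with transition function `ρ`
on the ω-word `u`: `r i = ρ (u i) (r (i+1))` for all `i`. -/
def IsBackRun {P A : Type*} (ρ : A → P → P) (u : ℕ → A) (r : ℕ → P) : Prop :=
  ∀ i, r i = ρ (u i) (r (i + 1))

/-- A run is final for the generalized transition Büchi condition `T` if for every `j`
the run uses a transition from `T j` infinitely often. -/
def GTBFinal {P A : Type*} {k : ℕ} (T : Fin k → Set (P × A × P)) (u : ℕ → A)
    (r : ℕ → P) : Prop :=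
  ∀ j : Fin k, ∀ m : ℕ, ∃ i, m ≤ i ∧ (r i, u i, r (i + 1)) ∈ T j

/-- A weak alternating automaton is very weak if all SCC's of its transition graph are
singletons, i.e., mutually reachable states are equal. -/
def VeryWeak {Q A : Type*} (M : WAA Q A) : Prop :=
  ∀ q q' : Q, M.Conn q q' → q = q'

/-!
The sets `α i` of states accepting the suffix at position `i` are themselves the final run.

Final run graphs may be glued along a well-order: a vertex follows the least graph containing it.
Along a path the index of the graph can only drop, so it stabilises and the glued graph is again
final. Hence one final run graph contains all accepting vertices, which makes `α` a backward run
and closes it under coinductive extensions by recurring states.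

A backward run may still take the wrong fixed point of the equation for a state `q`. The Büchi
condition of `q` forbids a recurring `q` to be absent forever while its own presence would suffice
to sustain it, and a non-recurring `q` to be present forever while relying on itself. In a very weak
automaton every state depends only on itself and on strictly lower states, so two final runs agree
by induction along the reachability order.
-/

open Filter

theorem exists_seq_of_forall_exists_rel {α : Type*} {r : α → α → Prop} {s : Set α} {a : α}
    (ha : a ∈ s) (h : ∀ x ∈ s, ∃ y ∈ s, r x y) :
    ∃ p : ℕ → α, (∀ n, p n ∈ s) ∧ ∀ n, r (p n) (p (n + 1)) := by
  choose f hf hr using fun x : s => h x x.2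
  let p (n : ℕ) : s := (fun x => ⟨f x, hf x⟩)^[n] ⟨a, ha⟩
  refine ⟨fun n => p n, fun n => (p n).2, fun n => ?_⟩
  simpa only [p, Function.iterate_succ_apply'] using hr (p n)

namespace TCond

variable {Q A : Type*} {τ τ₀ τ₁ τ₂ : TCond Q A} {a : A} {S S' : Set Q} {q : Q}

/-- Truth of a transition condition when reading the letter `a`, where `○q` is true iff `q ∈ S`;
`S` is the set of states accepting from the next position. -/
def Holds (a : A) (S : Set Q) : TCond Q A → Prop
  | atom B => a ∈ B
  | next q => q ∈ S
  | or τ₀ τ₁ => τ₀.Holds a S ∨ τ₁.Holds a S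
  | and τ₀ τ₁ => τ₀.Holds a S ∧ τ₁.Holds a S

theorem Holds.mono_of_nextOccurs (hτ : τ.Holds a S)
    (h : ∀ q, τ.NextOccurs q → q ∈ S → q ∈ S') : τ.Holds a S' := by
  induction τ with
  | atom B => exact hτ
  | next q => exact h q rfl hτ
  | or τ₀ τ₁ ih₀ ih₁ =>
    exact hτ.imp (ih₀ · fun q hq => h q (.inl hq)) (ih₁ · fun q hq => h q (.inr hq))
  | and τ₀ τ₁ ih₀ ih₁ =>
    exact hτ.imp (ih₀ · fun q hq => h q (.inl hq)) (ih₁ · fun q hq => h q (.inr hq))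

theorem Holds.mono (hτ : τ.Holds a S) (h : S ⊆ S') : τ.Holds a S' :=
  hτ.mono_of_nextOccurs fun _ _ hq => h hq

theorem Holds.decided_by_state (hS : τ.Holds a S) (hS' : ¬ τ.Holds a S')
    (hq : ∀ q', τ.NextOccurs q' → q' ≠ q → q' ∈ S → q' ∈ S') :
    (q ∈ S ∧ ¬ τ.Holds a (S \ {q})) ∧ q ∉ S' ∧ τ.Holds a (insert q S') := by
  have hdiff : ¬ τ.Holds a (S \ {q}) := fun h =>
    hS' (h.mono_of_nextOccurs fun q' hocc hq' => hq q' hocc hq'.2 hq'.1)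
  have hinsert : τ.Holds a (insert q S') := hS.mono_of_nextOccurs fun q' hocc hq' =>
    or_iff_not_imp_left.2 fun hne => hq q' hocc hne hq'
  refine ⟨⟨?_, hdiff⟩, ?_, hinsert⟩
  · by_contra hmem
    exact hdiff (by rwa [Set.sdiff_singleton_eq_self hmem])
  · intro hmem
    exact hS' (by rwa [Set.insert_eq_of_mem hmem] at hinsert)

theorem Subf.trans (h : Subf τ₀ τ₁) (h' : Subf τ₁ τ₂) : Subf τ₀ τ₂ := by
  induction h' with
  | refl => exact h
  | orL _ ih => exact .orL ih
  | orR _ ih => exact .orR ih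
  | andL _ ih => exact .andL ih
  | andR _ ih => exact .andR ih

end TCond

namespace WAA

variable {Q A : Type*} {M : WAA Q A} {u : ℕ → A}

/-! ### Infinite paths -/

/-- The syntactic successors of a vertex, that is, all targets that the definition of a run graph
permits for its outgoing edges. -/
def succs (M : WAA Q A) : Vert Q A → Set (Vert Q A)
  | (i, .inl q) => {(i, .inr (M.δ q))}
  | (_, .inr (.atom _)) => ∅
  | (i, .inr (.next q)) => {(i + 1, .inl q)}
  | (i, .inr (.or τ₀ τ₁)) => {(i, .inr τ₀), (i, .inr τ₁)}
  | (i, .inr (.and τ₀ τ₁)) => {(i, .inr τ₀), (i, .inr τ₁)}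

/-- Infinite paths through the graph of syntactic successors; the infinite paths of every run graph
are of this kind. -/
def IsPath (M : WAA Q A) (p : ℕ → Vert Q A) : Prop :=
  ∀ n, p (n + 1) ∈ M.succs (p n)

theorem le_fst_of_mem_succs {v w : Vert Q A} (h : w ∈ M.succs v) : v.1 ≤ w.1 := by
  obtain ⟨i, q | B | q | ⟨τ₀, τ₁⟩ | ⟨τ₀, τ₁⟩⟩ := v
  · obtain rfl := h
    rfl
  · exact h.elim
  · obtain rfl := h
    exact Nat.le_succ i
  · obtain rfl | rfl := h <;> rfl
  · obtain rfl | rfl := h <;> rfl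

theorem fst_lt_of_state_mem_succs {v : Vert Q A} {j : ℕ} {q : Q}
    (h : (j, .inl q) ∈ M.succs v) : v.1 < j := by
  obtain ⟨i, q' | B | q' | ⟨τ₀, τ₁⟩ | ⟨τ₀, τ₁⟩⟩ := v
  · cases h
  · exact h.elim
  · cases h
    exact Nat.lt_succ_self i
  · obtain h | h := h <;> cases h
  · obtain h | h := h <;> cases h

theorem IsPath.exists_state_of_eq_inr {p : ℕ → Vert Q A} (hp : M.IsPath p) {n i : ℕ}
    {τ : TCond Q A} (hn : p n = (i, .inr τ)) : ∃ m, n ≤ m ∧ ∃ j q, p m = (j, .inl q) := by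
  have hsucc := hn ▸ hp n
  induction τ generalizing n with
  | atom B => exact hsucc.elim
  | next q => exact ⟨n + 1, n.le_succ, i + 1, q, hsucc⟩
  | or τ₀ τ₁ ih₀ ih₁ | and τ₀ τ₁ ih₀ ih₁ =>
    obtain h | h := hsucc
    · obtain ⟨m, hm, hstate⟩ := ih₀ h (h ▸ hp (n + 1))
      exact ⟨m, n.le_succ.trans hm, hstate⟩
    · obtain ⟨m, hm, hstate⟩ := ih₁ h (h ▸ hp (n + 1))
      exact ⟨m, n.le_succ.trans hm, hstate⟩

theorem IsPath.exists_state {p : ℕ → Vert Q A} (hp : M.IsPath p) (n : ℕ) :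
    ∃ m, n ≤ m ∧ ∃ j q, p m = (j, .inl q) := by
  rcases hn : p n with ⟨i, q | τ⟩
  · exact ⟨n, le_rfl, i, q, hn⟩
  · exact hp.exists_state_of_eq_inr hn

theorem IsPath.tendsto_fst {p : ℕ → Vert Q A} (hp : M.IsPath p) :
    Tendsto (fun n => (p n).1) atTop atTop := by
  have hmono : Monotone fun n => (p n).1 :=
    monotone_nat_of_le_succ fun n => le_fst_of_mem_succs (hp n)
  refine tendsto_atTop_atTop_of_monotone hmono fun b => ?_
  induction b with
  | zero => exact ⟨0, Nat.zero_le _⟩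
  | succ b ih =>
    obtain ⟨n, hn⟩ := ih
    obtain ⟨m, hm, j, q, hstate⟩ := hp.exists_state (n + 1)
    obtain ⟨m, rfl⟩ := Nat.exists_eq_add_of_le' ((Nat.succ_pos n).trans_le hm)
    have hlt : (p m).1 < j := fst_lt_of_state_mem_succs (hstate ▸ hp m)
    have hle : (p n).1 ≤ (p m).1 := hmono (Nat.le_of_succ_le_succ hm)
    exact ⟨m + 1, by simp only [hstate]; omega⟩

/-! ### Run graphs as choices of successors -/

/-- `N` is a legal set of outgoing neighbours of the vertex `v` in a run graph on `u`. -/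
def IsSuccChoice (M : WAA Q A) (u : ℕ → A) : Vert Q A → Set (Vert Q A) → Prop
  | (i, .inl q), N => N = {(i, .inr (M.δ q))}
  | (i, .inr (.atom B)), N => N = ∅ ∧ u i ∈ B
  | (i, .inr (.next q)), N => N = {(i + 1, .inl q)}
  | (i, .inr (.or τ₀ τ₁)), N => N ⊆ {(i, .inr τ₀), (i, .inr τ₁)} ∧ N.Nonempty
  | (i, .inr (.and τ₀ τ₁)), N => N = {(i, .inr τ₀), (i, .inr τ₁)}

theorem IsSuccChoice.subset_succs {v : Vert Q A} {N : Set (Vert Q A)}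
    (h : M.IsSuccChoice u v N) : N ⊆ M.succs v := by
  obtain ⟨i, q | B | q | ⟨τ₀, τ₁⟩ | ⟨τ₀, τ₁⟩⟩ := v
  · exact h.subset
  · exact h.1.subset
  · exact h.subset
  · exact h.1
  · exact h.subset

namespace RunGraph

variable {G : RunGraph M u}

/-- The run graph given by a vertex set closed under a legal choice of successors. -/
def ofSucc (V : Set (Vert Q A)) (succ : Vert Q A → Set (Vert Q A))
    (hsubf : ∀ i τ, (i, Sum.inr τ) ∈ V → ∃ q, TCond.Subf τ (M.δ q))
    (hsucc : ∀ v ∈ V, M.IsSuccChoice u v (succ v) ∧ succ v ⊆ V) : RunGraph M u where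
  V := V
  E v w := v ∈ V ∧ w ∈ succ v
  edge_mem _ _ h := ⟨h.1, (hsucc _ h.1).2 h.2⟩
  cond_subf := hsubf
  state_succ _ _ hv w := (and_iff_right hv).trans (Set.ext_iff.1 (hsucc _ hv).1 w)
  next_succ _ _ hv w := (and_iff_right hv).trans (Set.ext_iff.1 (hsucc _ hv).1 w)
  or_succ_subset _ _ _ hv _ h := (hsucc _ hv).1.1 h.2
  or_succ_exists _ _ _ hv := (hsucc _ hv).1.2.imp fun _ hw => ⟨hv, hw⟩
  and_succ _ _ _ hv w := (and_iff_right hv).trans (Set.ext_iff.1 (hsucc _ hv).1 w)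
  atom_succ _ _ _ h := (hsucc _ h.1).1.1.subset h.2
  atom_ok _ _ hv := (hsucc _ hv).1.2

theorem isSuccChoice (G : RunGraph M u) {v : Vert Q A} (hv : v ∈ G.V) :
    M.IsSuccChoice u v {w | G.E v w} := by
  obtain ⟨i, q | B | q | ⟨τ₀, τ₁⟩ | ⟨τ₀, τ₁⟩⟩ := v
  · exact Set.ext (G.state_succ i q hv)
  · exact ⟨Set.eq_empty_of_forall_notMem (G.atom_succ i B), G.atom_ok i B hv⟩
  · exact Set.ext (G.next_succ i q hv)
  · exact ⟨G.or_succ_subset i τ₀ τ₁ hv, G.or_succ_exists i τ₀ τ₁ hv⟩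
  · exact Set.ext (G.and_succ i τ₀ τ₁ hv)

theorem isPath {p : ℕ → Vert Q A} (hp : ∀ n, G.E (p n) (p (n + 1))) : M.IsPath p :=
  fun n => (G.isSuccChoice (G.edge_mem (hp n)).1).subset_succs (hp n)

/-- The states occurring at position `i` of a run graph. -/
def states (G : RunGraph M u) (i : ℕ) : Set Q :=
  {q | (i, .inl q) ∈ G.V}

theorem delta_mem {i : ℕ} {q : Q} (h : q ∈ G.states i) : (i, .inr (M.δ q)) ∈ G.V :=
  (G.edge_mem ((G.state_succ i q h _).2 rfl)).2

theorem holds_of_mem {i : ℕ} {τ : TCond Q A} (h : (i, .inr τ) ∈ G.V) :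
    τ.Holds (u i) (G.states (i + 1)) := by
  induction τ with
  | atom B => exact G.atom_ok i B h
  | next q => exact (G.edge_mem ((G.next_succ i q h _).2 rfl)).2
  | or τ₀ τ₁ ih₀ ih₁ =>
    obtain ⟨w, hw⟩ := G.or_succ_exists i τ₀ τ₁ h
    have hmem := (G.edge_mem hw).2
    obtain rfl | rfl := G.or_succ_subset i τ₀ τ₁ h w hw
    · exact .inl (ih₀ hmem)
    · exact .inr (ih₁ hmem)
  | and τ₀ τ₁ ih₀ ih₁ =>
    exact ⟨ih₀ (G.edge_mem ((G.and_succ i τ₀ τ₁ h _).2 (.inl rfl))).2,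
      ih₁ (G.edge_mem ((G.and_succ i τ₀ τ₁ h _).2 (.inr rfl))).2⟩

/-! ### Gluing final run graphs -/

theorem Final.mem_recurring_of_eventually (hG : G.Final) {p : ℕ → Vert Q A} {N : ℕ}
    (hp : ∀ n, N ≤ n → G.E (p n) (p (n + 1))) {q : Q}
    (hq : ∀ m, ∃ n, m ≤ n ∧ (p n).2 = .inl q) : q ∈ M.recurring := by
  refine hG (fun n => p (N + n)) (fun n => hp (N + n) (Nat.le_add_right N n)) q fun m => ?_
  obtain ⟨n, hn, hstate⟩ := hq (N + m)
  obtain ⟨k, rfl⟩ := Nat.exists_eq_add_of_le ((Nat.le_add_right N m).trans hn)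
  exact ⟨k, by omega, hstate⟩

theorem exists_final_iUnion {ι : Type*} (G : ι → RunGraph M u) (hG : ∀ c, (G c).Final) :
    ∃ H : RunGraph M u, H.Final ∧ H.V = ⋃ c, (G c).V := by
  obtain ⟨_, _⟩ := exists_wellFoundedLT ι
  let IsIndex (v : Vert Q A) (c : ι) : Prop := IsLeast {c | v ∈ (G c).V} c
  let succ (v : Vert Q A) : Set (Vert Q A) := {w | ∃ c, IsIndex v c ∧ (G c).E v w}
  have succ_eq {v c} (hc : IsIndex v c) : succ v = {w | (G c).E v w} := by
    ext w
    exact ⟨fun ⟨c', hc', hw⟩ => hc.unique hc' ▸ hw, fun hw => ⟨c, hc, hw⟩⟩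
  refine ⟨ofSucc (⋃ c, (G c).V) succ (fun i τ h => ?_) (fun v hv => ?_), fun p hp q hq => ?_, rfl⟩
  · obtain ⟨c, hc⟩ := Set.mem_iUnion.1 h
    exact (G c).cond_subf i τ hc
  · obtain ⟨c, hc, hmin⟩ := wellFounded_lt.has_min {c | v ∈ (G c).V} (Set.mem_iUnion.1 hv)
    replace hc : IsIndex v c := ⟨hc, fun c' hc' => not_lt.1 (hmin c' hc')⟩
    rw [succ_eq hc]
    exact ⟨(G c).isSuccChoice hc.1,
      fun w hw => Set.mem_iUnion.2 ⟨c, ((G c).edge_mem hw).2⟩⟩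
  · choose c hc hE using fun n => (hp n).2
    have hanti : Antitone c :=
      antitone_nat_of_succ_le fun n => (hc (n + 1)).2 ((G (c n)).edge_mem (hE n)).2
    obtain ⟨N, hN⟩ := WellFoundedLT.antitone_chain_condition hanti
    exact (hG (c N)).mem_recurring_of_eventually (fun n hn => hN n hn ▸ hE n) hq

end RunGraph

/-! ### Coinductive extension of a final run graph -/

/-- The vertices that are true when `T i` is taken as the set of states accepting at position
`i`. -/
def trueVerts (M : WAA Q A) (u : ℕ → A) (T : ℕ → Set Q) : Set (Vert Q A)
  | (i, .inl q) => q ∈ T i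
  | (i, .inr τ) => (∃ q, TCond.Subf τ (M.δ q)) ∧ τ.Holds (u i) (T (i + 1))

theorem RunGraph.V_subset_trueVerts (G : RunGraph M u) {T : ℕ → Set Q}
    (h : ∀ i, G.states i ⊆ T i) : G.V ⊆ M.trueVerts u T := by
  rintro ⟨i, q | τ⟩ hv
  · exact h i hv
  · exact ⟨G.cond_subf i τ hv, (holds_of_mem hv).mono (h (i + 1))⟩

theorem isSuccChoice_trueVerts {T : ℕ → Set Q}
    (hT : ∀ i, ∀ q ∈ T i, (M.δ q).Holds (u i) (T (i + 1))) {v : Vert Q A}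
    (hv : v ∈ M.trueVerts u T) : M.IsSuccChoice u v (M.succs v ∩ M.trueVerts u T) := by
  obtain ⟨i, q | B | q | ⟨τ₀, τ₁⟩ | ⟨τ₀, τ₁⟩⟩ := v
  · exact Set.inter_eq_left.2 (Set.singleton_subset_iff.2 ⟨⟨q, .refl _⟩, hT i q hv⟩)
  · exact ⟨Set.empty_inter _, hv.2⟩
  · exact Set.inter_eq_left.2 (Set.singleton_subset_iff.2 hv.2)
  · obtain ⟨⟨q, hq⟩, h⟩ := hv
    refine ⟨Set.inter_subset_left, ?_⟩
    obtain h | h := h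
    · exact ⟨_, .inl rfl, ⟨q, (TCond.Subf.orL (.refl _)).trans hq⟩, h⟩
    · exact ⟨_, .inr rfl, ⟨q, (TCond.Subf.orR (.refl _)).trans hq⟩, h⟩
  · obtain ⟨⟨q, hq⟩, h₀, h₁⟩ := hv
    exact Set.inter_eq_left.2 (Set.pair_subset
      ⟨⟨q, (TCond.Subf.andL (.refl _)).trans hq⟩, h₀⟩
      ⟨⟨q, (TCond.Subf.andR (.refl _)).trans hq⟩, h₁⟩)

open Classical in
/-- The run graph that follows `G` on the vertices of `G` and takes all true successors at the
other true vertices. -/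
noncomputable def RunGraph.extend (G : RunGraph M u) (T : ℕ → Set Q)
    (hGT : ∀ i, G.states i ⊆ T i)
    (hT : ∀ i, ∀ q ∈ T i, (M.δ q).Holds (u i) (T (i + 1))) : RunGraph M u :=
  ofSucc (M.trueVerts u T)
    (fun v => if v ∈ G.V then {w | G.E v w} else M.succs v ∩ M.trueVerts u T)
    (fun _ _ h => h.1)
    (fun v hv => by
      split_ifs with hG
      · exact ⟨G.isSuccChoice hG, fun w hw => G.V_subset_trueVerts hGT (G.edge_mem hw).2⟩
      · exact ⟨isSuccChoice_trueVerts hT hv, Set.inter_subset_right⟩)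

theorem RunGraph.Final.extend {G : RunGraph M u} (hG : G.Final) {T : ℕ → Set Q}
    (hGT : ∀ i, G.states i ⊆ T i)
    (hT : ∀ i, ∀ q ∈ T i, (M.δ q).Holds (u i) (T (i + 1)))
    (hrec : ∀ q, (∃ᶠ i in atTop, q ∈ T i \ G.states i) → q ∈ M.recurring) :
    (G.extend T hGT hT).Final := by
  intro p hp q hq
  by_cases hmeet : ∃ N, p N ∈ G.V
  · obtain ⟨N, hN⟩ := hmeet
    have edge_of_mem {n : ℕ} (hn : p n ∈ G.V) : G.E (p n) (p (n + 1)) := by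
      have hsucc := (hp n).2
      simp only [if_pos hn] at hsucc
      exact hsucc
    have hmem : ∀ n, N ≤ n → p n ∈ G.V := fun n hn =>
      Nat.le_induction hN (fun n _ hn => (G.edge_mem (edge_of_mem hn)).2) n hn
    exact hG.mem_recurring_of_eventually (p := p) (fun n hn => edge_of_mem (hmem n hn)) hq
  · push Not at hmeet
    have hfreq : ∃ᶠ n in atTop, q ∈ T (p n).1 \ G.states (p n).1 := by
      refine (frequently_atTop.2 hq).mono fun n hn => ?_
      have hpn : p n = ((p n).1, .inl q) := Prod.ext rfl hn
      have htrue : p n ∈ M.trueVerts u T := (hp n).1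
      have hout := hmeet n
      rw [hpn] at htrue hout
      exact ⟨htrue, hout⟩
    exact hrec q ((isPath hp).tendsto_fst.frequently hfreq)

/-! ### Non-recurring states in final run graphs -/

/-- The vertices of `G` at positions `≥ m` that are either the state `q` or a condition which, in
`G`, is true only thanks to `q` at the next position. -/
def RunGraph.dependentVerts (G : RunGraph M u) (m : ℕ) (q : Q) : Set (Vert Q A) :=
  {v | v ∈ G.V ∧ m ≤ v.1 ∧
    Sum.elim (· = q) (fun τ => ¬ τ.Holds (u v.1) (G.states (v.1 + 1) \ {q})) v.2}

theorem RunGraph.exists_edge_dependentVerts {G : RunGraph M u} {m : ℕ} {q : Q}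
    (hq : ∀ i, m ≤ i → ¬ (M.δ q).Holds (u i) (G.states (i + 1) \ {q})) {v : Vert Q A}
    (hv : v ∈ G.dependentVerts m q) : ∃ w ∈ G.dependentVerts m q, G.E v w := by
  suffices h : ∃ w, G.E v w ∧ m ≤ w.1 ∧
      Sum.elim (· = q) (fun τ => ¬ τ.Holds (u w.1) (G.states (w.1 + 1) \ {q})) w.2 by
    obtain ⟨w, hE, hw⟩ := h
    exact ⟨w, ⟨(G.edge_mem hE).2, hw⟩, hE⟩
  obtain ⟨i, q' | B | q' | ⟨τ₀, τ₁⟩ | ⟨τ₀, τ₁⟩⟩ := v <;> obtain ⟨hV, hm, hdep⟩ := hv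
  · obtain rfl : q' = q := hdep
    exact ⟨_, (G.state_succ i q' hV _).2 rfl, hm, hq i hm⟩
  · exact (hdep (G.atom_ok i B hV)).elim
  · have hE := (G.next_succ i q' hV _).2 rfl
    exact ⟨_, hE, Nat.le_succ_of_le hm,
      by_contra fun hne => hdep ⟨(G.edge_mem hE).2, hne⟩⟩
  · obtain ⟨w, hE⟩ := G.or_succ_exists i τ₀ τ₁ hV
    refine ⟨w, hE, ?_⟩
    obtain rfl | rfl := G.or_succ_subset i τ₀ τ₁ hV w hE
    · exact ⟨hm, fun h => hdep (.inl h)⟩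
    · exact ⟨hm, fun h => hdep (.inr h)⟩
  · obtain h₀ | h₁ := not_and_or.1 hdep
    · exact ⟨_, (G.and_succ i τ₀ τ₁ hV _).2 (.inl rfl), hm, h₀⟩
    · exact ⟨_, (G.and_succ i τ₀ τ₁ hV _).2 (.inr rfl), hm, h₁⟩

theorem RunGraph.Final.exists_holds_diff_singleton {G : RunGraph M u} (hG : G.Final) {m : ℕ}
    {q : Q} (hrec : q ∉ M.recurring) (hmem : q ∈ G.states m) :
    ∃ i, m ≤ i ∧ (M.δ q).Holds (u i) (G.states (i + 1) \ {q}) := by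
  by_contra! hdep
  have hstart : (m, .inl q) ∈ G.dependentVerts m q := ⟨hmem, le_rfl, rfl⟩
  obtain ⟨p, hp, hE⟩ := exists_seq_of_forall_exists_rel hstart
    fun v hv => exists_edge_dependentVerts hdep hv
  refine hrec (hG p hE q fun n => ?_)
  obtain ⟨k, hk, j, q', hstate⟩ := (isPath hE).exists_state n
  obtain ⟨-, -, rfl⟩ : (j, .inl q') ∈ G.dependentVerts m q := hstate ▸ hp k
  exact ⟨k, hk, congrArg Prod.snd hstate⟩

/-! ### The sequence of acceptance sets -/

/-- The function computed by `M`: the set of states from which `u[i,ω)` is accepted. -/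
def acceptSet (M : WAA Q A) (u : ℕ → A) (i : ℕ) : Set Q :=
  {q | M.AcceptsFrom u i q}

theorem exists_final_states_eq_acceptSet (M : WAA Q A) (u : ℕ → A) :
    ∃ G : RunGraph M u, G.Final ∧ G.states = M.acceptSet u := by
  obtain ⟨H, hH, hV⟩ := RunGraph.exists_final_iUnion
    (fun G : {G : RunGraph M u // G.Final} => G.1) (fun G => G.2)
  refine ⟨H, hH, ?_⟩
  ext i q
  simp only [RunGraph.states, hV, acceptSet, AcceptsFrom, Set.mem_ofPred_eq, Set.mem_iUnion,
    Subtype.exists, exists_prop]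

theorem holds_acceptSet_of_mem {i : ℕ} {q : Q} (h : q ∈ M.acceptSet u i) :
    (M.δ q).Holds (u i) (M.acceptSet u (i + 1)) := by
  obtain ⟨G, hG, hq⟩ := h
  exact (RunGraph.holds_of_mem (RunGraph.delta_mem hq)).mono fun q' hq' => ⟨G, hG, hq'⟩

theorem subset_acceptSet_of_holds {S : ℕ → Set Q}
    (hS : ∀ i, ∀ q ∈ S i, (M.δ q).Holds (u i) (M.acceptSet u (i + 1) ∪ S (i + 1)))
    (hrec : ∀ q, (∃ᶠ i in atTop, q ∈ S i) → q ∈ M.recurring) (i : ℕ) :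
    S i ⊆ M.acceptSet u i := by
  obtain ⟨G, hG, hGα⟩ := exists_final_states_eq_acceptSet M u
  let T (i : ℕ) : Set Q := M.acceptSet u i ∪ S i
  have hGT (i : ℕ) : G.states i ⊆ T i := hGα ▸ Set.subset_union_left
  have hT (i : ℕ) (q : Q) (hq : q ∈ T i) : (M.δ q).Holds (u i) (T (i + 1)) :=
    hq.elim (fun h => (holds_acceptSet_of_mem h).mono Set.subset_union_left) (hS i q)
  have hfinal : (G.extend T hGT hT).Final := by
    refine hG.extend hGT hT fun q hq => hrec q (hq.mono fun i hi => ?_)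
    rw [hGα] at hi
    exact hi.1.resolve_left hi.2
  exact fun q hq => ⟨_, hfinal, Or.inr hq⟩

theorem mem_acceptSet_iff {i : ℕ} {q : Q} :
    q ∈ M.acceptSet u i ↔ (M.δ q).Holds (u i) (M.acceptSet u (i + 1)) := by
  refine ⟨holds_acceptSet_of_mem, fun h => ?_⟩
  refine subset_acceptSet_of_holds (S := fun j => {x | j = i ∧ x = q}) ?_ ?_ i ⟨rfl, rfl⟩
  · rintro _ _ ⟨rfl, rfl⟩
    exact h.mono Set.subset_union_left
  · intro _ hfreq
    obtain ⟨j, hij, hj, -⟩ := frequently_atTop'.1 hfreq i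
    exact (hij.ne' hj).elim

theorem exists_mem_acceptSet_or_not_holds_insert {q : Q} (hrec : q ∈ M.recurring) (m : ℕ) :
    ∃ i, m ≤ i ∧ (q ∈ M.acceptSet u i ∨
      ¬ (M.δ q).Holds (u i) (insert q (M.acceptSet u (i + 1)))) := by
  by_contra! hunfair
  refine (hunfair m le_rfl).1 <|
    subset_acceptSet_of_holds (S := fun j => {x | m ≤ j ∧ x = q}) ?_ ?_ m ⟨le_rfl, rfl⟩
  · rintro i _ ⟨hi, rfl⟩
    exact (hunfair i hi).2.mono
      (Set.insert_subset (.inr ⟨Nat.le_succ_of_le hi, rfl⟩) Set.subset_union_left)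
  · intro x hfreq
    obtain ⟨_, _, rfl⟩ := hfreq.exists
    exact hrec

theorem exists_notMem_acceptSet_or_holds_diff {q : Q} (hrec : q ∉ M.recurring) (m : ℕ) :
    ∃ i, m ≤ i ∧ (q ∉ M.acceptSet u i ∨
      (M.δ q).Holds (u i) (M.acceptSet u (i + 1) \ {q})) := by
  by_cases hm : q ∈ M.acceptSet u m
  · obtain ⟨G, hG, hq⟩ := hm
    obtain ⟨i, hi, h⟩ := hG.exists_holds_diff_singleton hrec hq
    have hGα : G.states (i + 1) ⊆ M.acceptSet u (i + 1) := fun q' hq' => ⟨G, hG, hq'⟩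
    exact ⟨i, hi, .inr (h.mono (Set.sdiff_subset_sdiff_left hGα))⟩
  · exact ⟨m, le_rfl, .inl hm⟩

/-! ### The backward deterministic automaton -/

/-- The transition function of the backward deterministic automaton on sets of states. -/
def backStep (M : WAA Q A) (a : A) (S : Set Q) : Set Q :=
  {q | (M.δ q).Holds a S}

/-- The transition Büchi set of the state `q`: it makes a backward run take the greatest fixed point
at a recurring state and the least one at a non-recurring state. -/
def fairTransitions (M : WAA Q A) (q : Q) : Set (Set Q × A × Set Q) :=
  {t | (q ∈ M.recurring → q ∈ t.1 ∨ ¬ (M.δ q).Holds t.2.1 (insert q t.2.2)) ∧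
    (q ∉ M.recurring → q ∉ t.1 ∨ (M.δ q).Holds t.2.1 (t.2.2 \ {q}))}

/-- Final runs of the backward deterministic automaton, with the Büchi sets indexed by `Q`. -/
structure IsFinalBackRun (M : WAA Q A) (u : ℕ → A) (s : ℕ → Set Q) : Prop where
  isBackRun : IsBackRun M.backStep u s
  fair : ∀ q, ∃ᶠ i in atTop, (s i, u i, s (i + 1)) ∈ M.fairTransitions q

theorem isFinalBackRun_acceptSet (M : WAA Q A) (u : ℕ → A) :
    M.IsFinalBackRun u (M.acceptSet u) := by
  refine ⟨fun i => Set.ext fun q => mem_acceptSet_iff, fun q => frequently_atTop.2 fun m => ?_⟩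
  by_cases hrec : q ∈ M.recurring
  · obtain ⟨i, hi, h⟩ := exists_mem_acceptSet_or_not_holds_insert hrec m
    exact ⟨i, hi, fun _ => h, fun h => (h hrec).elim⟩
  · obtain ⟨i, hi, h⟩ := exists_notMem_acceptSet_or_holds_diff hrec m
    exact ⟨i, hi, fun h => (hrec h).elim, fun _ => h⟩

theorem IsFinalBackRun.mem_of_mem {s s' : ℕ → Set Q} (hs : M.IsFinalBackRun u s)
    (hs' : M.IsFinalBackRun u s') {q : Q}
    (hlower : ∀ q', M.Edge q q' → q' ≠ q → ∀ i, q' ∈ s i → q' ∈ s' i) (i : ℕ)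
    (hq : q ∈ s i) : q ∈ s' i := by
  by_contra hq'
  have hdecided (j : ℕ) (hj : q ∈ s j ∧ q ∉ s' j) :=
    TCond.Holds.decided_by_state ((hs.isBackRun j).subset hj.1)
      (fun h => hj.2 ((hs'.isBackRun j).superset h))
      (fun q' hocc hne => hlower q' hocc hne (j + 1))
  have hforever (j : ℕ) (hj : i ≤ j) : q ∈ s j ∧ q ∉ s' j :=
    Nat.le_induction ⟨hq, hq'⟩
      (fun j _ ih => ⟨(hdecided j ih).1.1, (hdecided j ih).2.1⟩) j hj
  by_cases hrec : q ∈ M.recurring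
  · obtain ⟨j, hj, hfair⟩ := frequently_atTop.1 (hs'.fair q) i
    exact (hfair.1 hrec).elim (hforever j hj).2 (· (hdecided j (hforever j hj)).2.2)
  · obtain ⟨j, hj, hfair⟩ := frequently_atTop.1 (hs.fair q) i
    exact (hfair.2 hrec).elim (· (hforever j hj).1) (hdecided j (hforever j hj)).1.2

theorem wellFounded_edge_ne [Finite Q] (hvw : VeryWeak M) :
    WellFounded fun q' q => M.Edge q q' ∧ q' ≠ q := by
  let lower (q' q : Q) : Prop :=
    Relation.ReflTransGen M.Edge q q' ∧ ¬ Relation.ReflTransGen M.Edge q' q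
  have : IsTrans Q lower := ⟨fun _ _ _ h h' => ⟨h'.1.trans h.1, fun hr => h.2 (hr.trans h'.1)⟩⟩
  have : Std.Irrefl lower := ⟨fun _ h => h.2 .refl⟩
  refine Subrelation.wf (fun {q' q} h => ?_) (Finite.wellFounded_of_trans_of_irrefl lower)
  have hqq' : Relation.ReflTransGen M.Edge q q' := .single h.1
  exact ⟨hqq', fun hr => h.2 (hvw q' q ⟨hr, hqq'⟩)⟩

theorem IsFinalBackRun.le [Finite Q] (hvw : VeryWeak M) {s s' : ℕ → Set Q}
    (hs : M.IsFinalBackRun u s) (hs' : M.IsFinalBackRun u s') : s ≤ s' := by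
  suffices h : ∀ q i, q ∈ s i → q ∈ s' i from fun i q => h q i
  intro q
  induction q using (wellFounded_edge_ne hvw).induction with
  | _ q ih => exact hs.mem_of_mem hs' fun q' hedge hne => ih q' ⟨hedge, hne⟩

theorem isFinalBackRun_iff_eq_acceptSet [Finite Q] (hvw : VeryWeak M) {s : ℕ → Set Q} :
    M.IsFinalBackRun u s ↔ s = M.acceptSet u := by
  have hα := isFinalBackRun_acceptSet M u
  exact ⟨fun hs => le_antisymm (hs.le hvw hα) (hα.le hvw hs), fun hs => hs ▸ hα⟩

theorem isFinalBackRun_symm_comp_iff {P : Type*} (e : Set Q ≃ P) {k : ℕ} (f : Fin k ≃ Q)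
    {r : ℕ → P} :
    M.IsFinalBackRun u (e.symm ∘ r) ↔
      IsBackRun (fun a x => e (M.backStep a (e.symm x))) u r ∧
      GTBFinal (fun j => {t | (e.symm t.1, t.2.1, e.symm t.2.2) ∈ M.fairTransitions (f j)})
        u r := by
  have hrun : IsBackRun M.backStep u (e.symm ∘ r) ↔
      IsBackRun (fun a x => e (M.backStep a (e.symm x))) u r :=
    forall_congr' fun i => e.symm_apply_eq
  rw [← hrun]
  refine ⟨fun h => ⟨h.isBackRun, fun j => frequently_atTop.1 (h.fair (f j))⟩, fun h => ⟨h.1, ?_⟩⟩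
  exact f.forall_congr_right.1 fun j => frequently_atTop.2 (h.2 j)

end WAA

/-- for every very weak alternating automaton `M` with `n` states there
are a backward deterministic automaton with a generalized transition Büchi condition and
at most `2 ^ n` states and an output function `lam` such that `f_M = f_{ℬ,lam}`. -/
theorem very_weak_alternating_to_backward_deterministic {Q A : Type*} [Fintype Q]
    (M : WAA Q A) (hvw : VeryWeak M) :
    ∃ (P : Type) (_ : Fintype P) (ρ : A → P → P) (k : ℕ)
      (T : Fin k → Set (P × A × P)) (lam : P → Set Q),
      Fintype.card P ≤ 2 ^ Fintype.card Q ∧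
      (∀ u : ℕ → A, ∃! r : ℕ → P, IsBackRun ρ u r ∧ GTBFinal T u r) ∧
      (∀ (u : ℕ → A) (r : ℕ → P), IsBackRun ρ u r → GTBFinal T u r →
        ∀ i, lam (r i) = {q : Q | WAA.AcceptsFrom M u i q}) := by
  classical
  let f : Fin (Fintype.card Q) ≃ Q := (Fintype.equivFin Q).symm
  let e : Set Q ≃ Set (Fin (Fintype.card Q)) := Equiv.Set.congr f.symm
  have final_iff (u : ℕ → A) (r : ℕ → Set (Fin (Fintype.card Q))) :=
    (WAA.isFinalBackRun_symm_comp_iff e f (r := r)).symm.trans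
      (WAA.isFinalBackRun_iff_eq_acceptSet (u := u) hvw)
  refine ⟨Set (Fin (Fintype.card Q)), inferInstance, _, _, _, e.symm, ?_, fun u => ?_,
    fun u r hrun hfinal i => congrFun ((final_iff u r).1 ⟨hrun, hfinal⟩) i⟩
  · rw [Fintype.card_set, Fintype.card_fin]
  · simp only [final_iff, e.symm_comp_eq]
    exact existsUnique_eq
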